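/- (The worst-case cost is attained at an extreme injection profile, Section V.) Suppose each dissipation function f_{ij}(t,u,v) is differentiable and strictly increasing in its last argument, i.e. ∂f_{ij}/∂v(t,u,v) > 0, and suppose the right-hand side g(t,·,q(t)) is Lipschitz in ρ so that solutions are unique. Let L : [0,T] × ℝ^V → ℝ be a running cost such that for every t, L(t,·) is monotone nondecreasing with respect to the componentwise order on ℝ^V, and such that t ↦ L(t,ρ(t)) is integrable along the solutions considered. Let q̲, q̄ : [0,T] → ℝ^V be continuous with q̲(t) ≤ q̄(t) for all t, fix an initial condition ρ⁰ ∈ ℝ^V, and for any continuous injection q with q̲(t) ≤ q(t) ≤ q̄(t) for all t ∈ [0,T] let ρ^q denote the solution of the nodal network flow dynamics with injections q and ρ^q(0) = ρ⁰. Then for every such q, ∫₀ᵀ L(t, ρ^q(t)) dt ≤ ∫₀ᵀ L(t, ρ^{q̄}(t)) dt; i.e. the maximum of the cost over the uncertainty set [q̲, q̄] is attained at the upper bound q̄. -/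

import Mathlib

open MeasureTheory

/-!
Two nodes of the network interact only through the `v`-argument of the dissipation on their common
edge, and `f` is nondecreasing there. Raising the density of a neighbour of `j` while `ρ j` stays
fixed therefore cannot lower `ρ̇ j`: the dynamics are quasimonotone, and they are monotone in the
injection. A trajectory with the smaller injection is thus a subsolution of the dynamics with the
larger one, and the Kamke–Müller comparison principle orders the two trajectories. In its proof the
supersolution is raised by `η * exp ((K + 1) * (s - t))`, which outgrows the `K`-Lipschitz error and
makes the inequality strict, so that no component of the difference can cross zero.
-/

section Comparison

open Set Filter Topology

variable {ι : Type*}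

/-- A vector field `F` is quasimonotone (Kamke's condition, Müller's type K condition) if each
component `F · j` is nondecreasing in all coordinates other than the `j`-th. -/
def IsQuasimonotone (F : (ι → ℝ) → ι → ℝ) : Prop :=
  ∀ ⦃x y : ι → ℝ⦄, x ≤ y → ∀ j, x j = y j → F x j ≤ F y j

variable {a b t : ℝ}

theorem eventually_lt_nhdsGT_of_hasDerivWithinAt_neg {φ : ℝ → ℝ} {φ' : ℝ}
    (hφ : HasDerivWithinAt φ φ' (Ici t) t) (hneg : φ' < 0) : ∀ᶠ s in 𝓝[>] t, φ s < φ t := by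
  filter_upwards [hφ.Ioi_of_Ici.limsup_slope_le' self_notMem_Ioi hneg, self_mem_nhdsWithin]
    with s hslope hts
  rw [slope_def_field, div_lt_iff₀ (sub_pos.2 hts), zero_mul] at hslope
  exact sub_neg.1 hslope

theorem eventually_nonpos_nhdsGT_of_hasDerivWithinAt {φ : ℝ → ℝ} {φ' : ℝ}
    (hφ : HasDerivWithinAt φ φ' (Ici t) t) (hle : φ t ≤ 0) (hneg : φ t = 0 → φ' < 0) :
    ∀ᶠ s in 𝓝[>] t, φ s ≤ 0 := by
  rcases hle.lt_or_eq with hlt | hzero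
  · have hright : Tendsto φ (𝓝[>] t) (𝓝 (φ t)) := hφ.Ioi_of_Ici.continuousWithinAt
    exact (hright.eventually_lt_const hlt).mono fun _ => le_of_lt
  · exact (eventually_lt_nhdsGT_of_hasDerivWithinAt_neg hφ (hneg hzero)).mono
      fun _ hs => (hs.trans_eq hzero).le

theorem nonpos_of_deriv_right_neg_of_eq_zero [Finite ι] {u u' : ℝ → ι → ℝ}
    (hu : ContinuousOn u (Icc a b))
    (hu' : ∀ t ∈ Ico a b, HasDerivWithinAt u (u' t) (Ici t) t) (ha : u a ≤ 0)
    (hneg : ∀ t ∈ Ico a b, u t ≤ 0 → ∀ j, u t j = 0 → u' t j < 0) :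
    ∀ t ∈ Icc a b, u t ≤ 0 := by
  have := Fintype.ofFinite ι
  have hclosed : IsClosed (u ⁻¹' Iic 0 ∩ Icc a b) := by
    rw [inter_comm]
    exact hu.preimage_isClosed_of_isClosed isClosed_Icc isClosed_Iic
  refine hclosed.Icc_subset_of_forall_exists_gt ha fun t ⟨hut, ht⟩ s hs => ?_
  have hright : ∀ᶠ r in 𝓝[>] t, ∀ j, u r j ≤ 0 := eventually_all.2 fun j =>
    eventually_nonpos_nhdsGT_of_hasDerivWithinAt (hasDerivWithinAt_pi.1 (hu' t ht) j) (hut j)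
      (hneg t ht hut j)
  exact (hright.and (Ioc_mem_nhdsGT hs)).exists

variable {F : ℝ → (ι → ℝ) → ι → ℝ} {x x' y y' : ℝ → ι → ℝ}

theorem le_of_subsolution_of_strict_supersolution [Finite ι]
    (hF : ∀ t ∈ Ico a b, IsQuasimonotone (F t))
    (hx : ContinuousOn x (Icc a b))
    (hx' : ∀ t ∈ Ico a b, HasDerivWithinAt x (x' t) (Ici t) t)
    (hxF : ∀ t ∈ Ico a b, x' t ≤ F t (x t))
    (hy : ContinuousOn y (Icc a b))
    (hy' : ∀ t ∈ Ico a b, HasDerivWithinAt y (y' t) (Ici t) t)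
    (hyF : ∀ t ∈ Ico a b, ∀ j, F t (y t) j < y' t j)
    (ha : x a ≤ y a) :
    ∀ t ∈ Icc a b, x t ≤ y t := by
  have := Fintype.ofFinite ι
  suffices hdiff : ∀ t ∈ Icc a b, (x - y) t ≤ 0 from fun t ht => sub_nonpos.1 (hdiff t ht)
  refine nonpos_of_deriv_right_neg_of_eq_zero (hx.sub hy) (fun t ht => (hx' t ht).sub (hy' t ht))
    (sub_nonpos.2 ha) fun t ht hle j hj => ?_
  have hFxy : F t (x t) j ≤ F t (y t) j := hF t ht (sub_nonpos.1 hle) j (sub_eq_zero.1 hj)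
  exact sub_neg.2 (((hxF t ht j).trans hFxy).trans_lt (hyF t ht j))

variable [Fintype ι]

theorem apply_add_const_le_of_lipschitzWith {κ : Type*} [Fintype κ] {G : (ι → ℝ) → κ → ℝ}
    {K : NNReal} (hG : LipschitzWith K G) (z : ι → ℝ) {δ : ℝ} (hδ : 0 ≤ δ) (j : κ) :
    G (z + Function.const ι δ) j ≤ G z j + K * δ := by
  refine sub_le_iff_le_add'.1 ?_
  calc G (z + Function.const ι δ) j - G z j
      ≤ dist (G (z + Function.const ι δ) j) (G z j) := le_abs_self _
    _ ≤ dist (G (z + Function.const ι δ)) (G z) := dist_le_pi_dist _ _ j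
    _ ≤ K * dist (z + Function.const ι δ) z := hG.dist_le_mul _ _
    _ ≤ K * δ := by
      rw [dist_self_add_left]
      gcongr
      exact (pi_norm_const_le δ).trans_eq (Real.norm_of_nonneg hδ)

theorem le_of_subsolution_of_supersolution {K : NNReal}
    (hF : ∀ t ∈ Ico a b, IsQuasimonotone (F t))
    (hLip : ∀ t ∈ Ico a b, LipschitzWith K (F t))
    (hx : ContinuousOn x (Icc a b))
    (hx' : ∀ t ∈ Ico a b, HasDerivWithinAt x (x' t) (Ici t) t)
    (hxF : ∀ t ∈ Ico a b, x' t ≤ F t (x t))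
    (hy : ContinuousOn y (Icc a b))
    (hy' : ∀ t ∈ Ico a b, HasDerivWithinAt y (y' t) (Ici t) t)
    (hyF : ∀ t ∈ Ico a b, F t (y t) ≤ y' t)
    (ha : x a ≤ y a) :
    ∀ t ∈ Icc a b, x t ≤ y t := by
  intro t ht j
  refine le_of_forall_pos_le_add fun η hη => ?_
  let δ : ℝ → ℝ := fun s => η * Real.exp ((K + 1) * (s - t))
  have hδpos : ∀ s, 0 < δ s := fun s => by positivity
  have hδ' : ∀ s, HasDerivAt δ ((K + 1) * δ s) s := fun s => by
    have hexponent : HasDerivAt (fun s => ((K : ℝ) + 1) * (s - t)) (K + 1) s := by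
      simpa only [id_eq, mul_one] using ((hasDerivAt_id s).sub_const t).const_mul ((K : ℝ) + 1)
    exact (hexponent.exp.const_mul η).congr_deriv (by ring)
  have hδvec : ∀ s, HasDerivAt (fun s => Function.const ι (δ s))
      (Function.const ι ((K + 1) * δ s)) s := fun s => hasDerivAt_pi.2 fun _ => hδ' s
  have hstrict : ∀ s ∈ Ico a b, ∀ k,
      F s (y s + Function.const ι (δ s)) k < y' s k + (K + 1) * δ s := fun s hs k => by
    have hshift := apply_add_const_le_of_lipschitzWith (hLip s hs) (y s) (hδpos s).le k
    linarith [hyF s hs k, hδpos s]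
  have hraised : x t ≤ y t + Function.const ι (δ t) :=
    le_of_subsolution_of_strict_supersolution hF hx hx' hxF
      (hy.add fun s _ => (hδvec s).continuousAt.continuousWithinAt)
      (fun s hs => (hy' s hs).add (hδvec s).hasDerivWithinAt) hstrict
      (ha.trans (le_add_of_nonneg_right fun _ => (hδpos a).le)) t ht
  have hδt : δ t = η := by simp only [δ, sub_self, mul_zero, Real.exp_zero, mul_one]
  exact hδt ▸ hraised j

end Comparison

/-- The data of the nodal network flow dynamics on the node set `V`: the directed edges, the
discretization length `ℓ`, the compression ratios `ᾱ` (`abar`, acting at the head `j` of an edge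
`(i, j)`) and `α̲` (`aund`, acting at its tail `i`), and the dissipation functions `f`. The standing
assumptions are kept apart, in `FlowNetwork.IsAdmissibleAt`. -/
structure FlowNetwork (V : Type*) where
  edges : Finset (V × V)
  ℓ : ℝ
  abar : V × V → ℝ → ℝ
  aund : V × V → ℝ → ℝ
  f : V × V → ℝ → ℝ → ℝ → ℝ

namespace FlowNetwork

variable {V : Type*}

/-- The standing assumptions on the network at time `t`: positive length and compression ratios, no
isolated node, and dissipation nondecreasing in its last argument. Differentiability of the ratios
gives the term `α̇ⱼ` of the dynamics, encoded with `deriv`, its meaning. -/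
structure IsAdmissibleAt (N : FlowNetwork V) (t : ℝ) : Prop where
  length_pos : 0 < N.ℓ
  exists_incident : ∀ j, (∃ i, (i, j) ∈ N.edges) ∨ ∃ k, (j, k) ∈ N.edges
  abar_pos : ∀ e ∈ N.edges, 0 < N.abar e t
  aund_pos : ∀ e ∈ N.edges, 0 < N.aund e t
  differentiableAt_abar : ∀ e ∈ N.edges, DifferentiableAt ℝ (N.abar e) t
  differentiableAt_aund : ∀ e ∈ N.edges, DifferentiableAt ℝ (N.aund e) t
  monotone_f : ∀ e ∈ N.edges, ∀ u, Monotone (N.f e t u)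

variable [Fintype V] [DecidableEq V]

/-- The aggregated nodal actuation `αⱼ(t)`, the sum of the compression ratios at node `j`. -/
def actuation (N : FlowNetwork V) (j : V) (t : ℝ) : ℝ :=
  (∑ i with (i, j) ∈ N.edges, N.abar (i, j) t) + ∑ k with (j, k) ∈ N.edges, N.aund (j, k) t

/-- The right-hand side `g(t, ρ, q)` of the nodal network flow dynamics. -/
noncomputable def vectorField (N : FlowNetwork V) (t : ℝ) (ρ q : V → ℝ) (j : V) : ℝ :=
  2 / (N.ℓ * N.actuation j t) *
    ((∑ k with (j, k) ∈ N.edges, N.f (j, k) t (N.aund (j, k) t * ρ j)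
        ((N.abar (j, k) t * ρ k - N.aund (j, k) t * ρ j) / N.ℓ)) -
      (∑ i with (i, j) ∈ N.edges, N.f (i, j) t (N.abar (i, j) t * ρ j)
        ((N.abar (i, j) t * ρ j - N.aund (i, j) t * ρ i) / N.ℓ)) +
      q j) -
    deriv (N.actuation j) t / N.actuation j t * ρ j

/-- `ρ` solves the dynamics of `N` on `[a, b]` with injections `q`, in the sense of right
derivatives. -/
structure IsSolutionOn (N : FlowNetwork V) (q ρ : ℝ → V → ℝ) (a b : ℝ) : Prop where
  continuousOn : ContinuousOn ρ (Set.Icc a b)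
  hasDerivWithinAt : ∀ t ∈ Set.Ico a b,
    HasDerivWithinAt ρ (N.vectorField t (ρ t) (q t)) (Set.Ici t) t

variable {N : FlowNetwork V} {t : ℝ}

theorem IsAdmissibleAt.actuation_pos (hN : N.IsAdmissibleAt t) (j : V) :
    0 < N.actuation j t := by
  have habar : ∀ i ∈ Finset.univ.filter fun i => (i, j) ∈ N.edges, 0 < N.abar (i, j) t :=
    fun i hi => hN.abar_pos _ (Finset.mem_filter_univ i |>.1 hi)
  have haund : ∀ k ∈ Finset.univ.filter fun k => (j, k) ∈ N.edges, 0 < N.aund (j, k) t :=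
    fun k hk => hN.aund_pos _ (Finset.mem_filter_univ k |>.1 hk)
  rcases hN.exists_incident j with ⟨i, hi⟩ | ⟨k, hk⟩
  · exact add_pos_of_pos_of_nonneg
      (Finset.sum_pos habar ⟨i, Finset.mem_filter_univ i |>.2 hi⟩)
      (Finset.sum_nonneg fun k hk => (haund k hk).le)
  · exact add_pos_of_nonneg_of_pos (Finset.sum_nonneg fun i hi => (habar i hi).le)
      (Finset.sum_pos haund ⟨k, Finset.mem_filter_univ k |>.2 hk⟩)

theorem IsAdmissibleAt.two_div_length_mul_actuation_pos (hN : N.IsAdmissibleAt t) (j : V) :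
    0 < 2 / (N.ℓ * N.actuation j t) :=
  div_pos two_pos (mul_pos hN.length_pos (hN.actuation_pos j))

theorem IsAdmissibleAt.monotone_vectorField (hN : N.IsAdmissibleAt t) (ρ : V → ℝ) :
    Monotone (N.vectorField t ρ) := by
  intro p q hpq j
  have hcoeff := hN.two_div_length_mul_actuation_pos j
  unfold vectorField
  gcongr
  exact hpq j

theorem IsAdmissibleAt.isQuasimonotone_vectorField (hN : N.IsAdmissibleAt t) (q : V → ℝ) :
    IsQuasimonotone fun ρ => N.vectorField t ρ q := by
  intro x y hxy j hj
  have hcoeff := hN.two_div_length_mul_actuation_pos j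
  have hℓ := hN.length_pos
  simp only [vectorField, hj]
  gcongr with k hk i hi
  · have hedge := Finset.mem_filter_univ k |>.1 hk
    have hratio := hN.abar_pos _ hedge
    apply hN.monotone_f _ hedge
    gcongr
    exact hxy k
  · have hedge := Finset.mem_filter_univ i |>.1 hi
    have hratio := hN.aund_pos _ hedge
    apply hN.monotone_f _ hedge
    gcongr
    exact hxy i

theorem IsSolutionOn.mono_injection {q r ρ σ : ℝ → V → ℝ} {a b : ℝ} {K : NNReal}
    (hN : ∀ t ∈ Set.Ico a b, N.IsAdmissibleAt t)
    (hLip : ∀ t ∈ Set.Ico a b, LipschitzWith K fun ρ => N.vectorField t ρ (r t))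
    (hqr : ∀ t ∈ Set.Ico a b, q t ≤ r t)
    (hρ : N.IsSolutionOn q ρ a b) (hσ : N.IsSolutionOn r σ a b) (ha : ρ a ≤ σ a) :
    ∀ t ∈ Set.Icc a b, ρ t ≤ σ t :=
  le_of_subsolution_of_supersolution (fun t ht => (hN t ht).isQuasimonotone_vectorField (r t)) hLip
    hρ.continuousOn hρ.hasDerivWithinAt (fun t ht => (hN t ht).monotone_vectorField _ (hqr t ht))
    hσ.continuousOn hσ.hasDerivWithinAt (fun _ _ => le_rfl) ha

theorem isSolutionOn_of_hasDerivAt {q ρ : ℝ → V → ℝ} {a b : ℝ}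
    (hρ : ∀ t ∈ Set.Icc a b, HasDerivAt ρ (N.vectorField t (ρ t) (q t)) t) :
    N.IsSolutionOn q ρ a b where
  continuousOn t ht := (hρ t ht).continuousAt.continuousWithinAt
  hasDerivWithinAt t ht := (hρ t (Set.Ico_subset_Icc_self ht)).hasDerivWithinAt

end FlowNetwork

theorem worst_case_cost_attained_at_upper_injection_general {V : Type*} [Fintype V] [DecidableEq V]
    (N : FlowNetwork V) {T : ℝ} (hN : ∀ t ∈ Set.Ico 0 T, N.IsAdmissibleAt t)
    {q qhi ρ ρhi : ℝ → V → ℝ} {K : NNReal}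
    (hLip : ∀ t ∈ Set.Ico 0 T, LipschitzWith K fun ρ => N.vectorField t ρ (qhi t))
    (hq : ∀ t ∈ Set.Ico 0 T, q t ≤ qhi t)
    (hρ : N.IsSolutionOn q ρ 0 T) (hρhi : N.IsSolutionOn qhi ρhi 0 T) (h0 : ρ 0 ≤ ρhi 0)
    {L : ℝ → (V → ℝ) → ℝ} (hL : ∀ t ∈ Set.Icc 0 T, Monotone (L t))
    (hint : IntegrableOn (fun t => L t (ρ t)) (Set.Icc 0 T))
    (hint_hi : IntegrableOn (fun t => L t (ρhi t)) (Set.Icc 0 T)) :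
    ∫ t in Set.Icc 0 T, L t (ρ t) ≤ ∫ t in Set.Icc 0 T, L t (ρhi t) :=
  setIntegral_mono_on hint hint_hi measurableSet_Icc fun t ht =>
    hL t ht (hρ.mono_injection hN hLip hq hρhi h0 t ht)

/-- Worst-case cost is attained at the extreme injection profile (Section V): for a running
cost `L(t,·)` monotone nondecreasing in the state, the cost along the solution for any
injection profile in the uncertainty band `[q̲, q̄]` is at most the cost along the solution
for the upper bound `q̄`. -/
theorem worst_case_cost_attained_at_upper_injection
    (V : Type*) [Fintype V] [DecidableEq V]
    (E : Finset (V × V))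
    (hE_noloop : ∀ e ∈ E, e.1 ≠ e.2)
    (hE_inc : ∀ j : V, (∃ i, (i, j) ∈ E) ∨ (∃ k, (j, k) ∈ E))
    (ℓ T : ℝ) (hℓ : 0 < ℓ) (hT : 0 < T)
    -- compression ratio functions ᾱ (abar) and α̲ (aund), C¹ and strictly positive on [0,T]
    (abar aund : V × V → ℝ → ℝ)
    (habar : ∀ e ∈ E, ContDiff ℝ 1 (abar e) ∧ ∀ t ∈ Set.Icc (0:ℝ) T, 0 < abar e t)
    (haund : ∀ e ∈ E, ContDiff ℝ 1 (aund e) ∧ ∀ t ∈ Set.Icc (0:ℝ) T, 0 < aund e t)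
    -- differentiable dissipation functions f_{ij}(t,u,v)
    (f : V × V → ℝ → ℝ → ℝ → ℝ)
    (hf : ∀ e ∈ E, Differentiable ℝ (fun z : ℝ × ℝ × ℝ => f e z.1 z.2.1 z.2.2))
    -- aggregated nodal actuation α_j(t)
    (A : V → ℝ → ℝ)
    (hA : ∀ (j : V) (t : ℝ), A j t =
      (∑ i ∈ Finset.univ.filter (fun i : V => (i, j) ∈ E), abar (i, j) t) +
      (∑ k ∈ Finset.univ.filter (fun k : V => (j, k) ∈ E), aund (j, k) t))
    -- the nodal network flow dynamics ρ̇_j = g_j(t, ρ, q)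
    (g : ℝ → (V → ℝ) → (V → ℝ) → V → ℝ)
    (hg : ∀ (t : ℝ) (ρ qv : V → ℝ) (j : V), g t ρ qv j =
      (2 / (ℓ * A j t)) *
        ((∑ k ∈ Finset.univ.filter (fun k : V => (j, k) ∈ E),
            f (j, k) t (aund (j, k) t * ρ j)
              ((abar (j, k) t * ρ k - aund (j, k) t * ρ j) / ℓ)) -
         (∑ i ∈ Finset.univ.filter (fun i : V => (i, j) ∈ E),
            f (i, j) t (abar (i, j) t * ρ j)
              ((abar (i, j) t * ρ j - aund (i, j) t * ρ i) / ℓ)) +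
         qv j) -
      (deriv (A j) t / A j t) * ρ j)
    -- each dissipation function is strictly increasing in its last argument
    (hf_incr : ∀ e ∈ E, ∀ t ∈ Set.Icc (0:ℝ) T, ∀ u v : ℝ,
      0 < deriv (fun w : ℝ => f e t u w) v)
    -- Lipschitz continuity of the right-hand side in ρ (solutions are unique)
    (K : NNReal)
    (hLip : ∀ t ∈ Set.Icc (0:ℝ) T, ∀ qv : V → ℝ, LipschitzWith K (fun ρ => g t ρ qv))
    -- running cost, monotone nondecreasing in the state
    (L : ℝ → (V → ℝ) → ℝ)
    (hLmono : ∀ t ∈ Set.Icc (0:ℝ) T, ∀ ρa ρb : V → ℝ, ρa ≤ ρb → L t ρa ≤ L t ρb)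
    -- injection uncertainty band
    (qlo qhi : ℝ → V → ℝ) (hqlo : Continuous qlo) (hqhi : Continuous qhi)
    (hband : ∀ t ∈ Set.Icc (0:ℝ) T, qlo t ≤ qhi t)
    -- a sandwiched injection profile
    (q : ℝ → V → ℝ) (hqc : Continuous q)
    (hq : ∀ t ∈ Set.Icc (0:ℝ) T, qlo t ≤ q t ∧ q t ≤ qhi t)
    -- common initial condition and the solutions for q and for q̄
    (ρ0 : V → ℝ)
    (ρq ρqhi : ℝ → V → ℝ)
    (hρq : ∀ s ∈ Set.Icc (0:ℝ) T, HasDerivAt ρq (g s (ρq s) (q s)) s)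
    (hρqhi : ∀ s ∈ Set.Icc (0:ℝ) T, HasDerivAt ρqhi (g s (ρqhi s) (qhi s)) s)
    (h0q : ρq 0 = ρ0) (h0qhi : ρqhi 0 = ρ0)
    -- integrability of the running cost along the two solutions
    (hint_q : IntegrableOn (fun t => L t (ρq t)) (Set.Icc 0 T))
    (hint_qhi : IntegrableOn (fun t => L t (ρqhi t)) (Set.Icc 0 T)) :
    ∫ t in Set.Icc (0:ℝ) T, L t (ρq t) ≤ ∫ t in Set.Icc (0:ℝ) T, L t (ρqhi t) := by
  let N : FlowNetwork V := ⟨E, ℓ, abar, aund, f⟩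
  obtain rfl : A = N.actuation := funext₂ hA
  obtain rfl : g = N.vectorField := by ext t ρ qv j; exact hg t ρ qv j
  have hN : ∀ t ∈ Set.Ico 0 T, N.IsAdmissibleAt t := fun t ht =>
    have ht := Set.Ico_subset_Icc_self ht
    { length_pos := hℓ
      exists_incident := hE_inc
      abar_pos := fun e he => (habar e he).2 t ht
      aund_pos := fun e he => (haund e he).2 t ht
      differentiableAt_abar := fun e he => (habar e he).1.differentiable one_ne_zero t
      differentiableAt_aund := fun e he => (haund e he).1.differentiable one_ne_zero t
      monotone_f := fun e he u => (strictMono_of_deriv_pos (hf_incr e he t ht u)).monotone }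
  exact worst_case_cost_attained_at_upper_injection_general N hN
    (fun t ht => hLip t (Set.Ico_subset_Icc_self ht) (qhi t))
    (fun t ht => (hq t (Set.Ico_subset_Icc_self ht)).2)
    (N.isSolutionOn_of_hasDerivAt hρq) (N.isSolutionOn_of_hasDerivAt hρqhi)
    (h0q.trans h0qhi.symm).le hLmono hint_q hint_qhi
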